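/- Let x, v ∈ ℝ³ with x ≠ 0 and let G, M > 0. Define E := (1/2)‖v‖² − G·M/(4‖x‖), J := x × v, and e := (4/(G·M))·( v × J − (G·M/(4‖x‖))·x ). Then ‖e‖² = 1 + 32·E·‖J‖²/(G·M)². In particular E < 0 if and only if ‖e‖ < 1, and E > 0 if and only if ‖e‖ > 1 (when J ≠ 0). -/

import Mathlib

/-- The cross product on `ℝ³ = EuclideanSpace ℝ (Fin 3)`. -/
noncomputable def cross3 (a b : EuclideanSpace ℝ (Fin 3)) : EuclideanSpace ℝ (Fin 3) :=
  (EuclideanSpace.equiv (Fin 3) ℝ).symm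
    ![a 1 * b 2 - a 2 * b 1, a 2 * b 0 - a 0 * b 2, a 0 * b 1 - a 1 * b 0]

/-!
The vector `w = v × J` equals `‖v‖² x - ⟪x, v⟫ v`, which makes sense in every real inner product
space, as does `‖J‖² = ‖x‖² ‖v‖² - ⟪x, v⟫²`. Since `‖w‖² = ‖v‖² ‖J‖²` and `⟪w, x⟫ = ‖J‖²`, with
`k = G M / 4` we get `‖w - (k / ‖x‖) x‖² = (‖v‖² - 2 k / ‖x‖) ‖J‖² + k² = 2 E ‖J‖² + k²`.
-/

open scoped Matrix RealInnerProductSpace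

section InnerProductSpace

variable {V : Type*} [NormedAddCommGroup V] [InnerProductSpace ℝ V]

/-- The energy per unit mass at position `x` and velocity `v` in the potential `-k / ‖x‖`;
`k < 0` is the repulsive case. -/
noncomputable def keplerEnergy (k : ℝ) (x v : V) : ℝ :=
  1 / 2 * ‖v‖ ^ 2 - k / ‖x‖

/-- The squared length of the angular momentum `x ∧ v`, written as the Gram determinant of `x`
and `v` so that it needs no cross product. -/
noncomputable def angularMomentumSq (x v : V) : ℝ :=
  ‖x‖ ^ 2 * ‖v‖ ^ 2 - ⟪x, v⟫ ^ 2

/-- The vector `v × (x × v)`, expanded by the triple product formula so that it needs no cross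
product. -/
noncomputable def velocityCrossMomentum (x v : V) : V :=
  ‖v‖ ^ 2 • x - ⟪x, v⟫ • v

/-- The eccentricity (Laplace–Runge–Lenz) vector for the potential `-k / ‖x‖`. -/
noncomputable def eccentricityVector (k : ℝ) (x v : V) : V :=
  k⁻¹ • (velocityCrossMomentum x v - (k / ‖x‖) • x)

theorem angularMomentumSq_nonneg (x v : V) : 0 ≤ angularMomentumSq x v := by
  rw [angularMomentumSq, sub_nonneg, ← mul_pow]
  exact sq_le_sq.mpr ((abs_real_inner_le_norm x v).trans (le_abs_self _))

theorem inner_velocityCrossMomentum_position (x v : V) :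
    ⟪velocityCrossMomentum x v, x⟫ = angularMomentumSq x v := by
  rw [velocityCrossMomentum, inner_sub_left, real_inner_smul_left, real_inner_smul_left,
    real_inner_self_eq_norm_sq, real_inner_comm x v, angularMomentumSq]
  ring

theorem inner_velocityCrossMomentum_velocity (x v : V) : ⟪velocityCrossMomentum x v, v⟫ = 0 := by
  rw [velocityCrossMomentum, inner_sub_left, real_inner_smul_left, real_inner_smul_left,
    real_inner_self_eq_norm_sq]
  ring

theorem norm_velocityCrossMomentum_sq (x v : V) :
    ‖velocityCrossMomentum x v‖ ^ 2 = ‖v‖ ^ 2 * angularMomentumSq x v := by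
  rw [← real_inner_self_eq_norm_sq]
  nth_rw 2 [velocityCrossMomentum]
  rw [inner_sub_right, real_inner_smul_right, real_inner_smul_right,
    inner_velocityCrossMomentum_position, inner_velocityCrossMomentum_velocity, mul_zero, sub_zero]

theorem norm_velocityCrossMomentum_sub_sq (k : ℝ) {x : V} (hx : x ≠ 0) (v : V) :
    ‖velocityCrossMomentum x v - (k / ‖x‖) • x‖ ^ 2 =
      2 * keplerEnergy k x v * angularMomentumSq x v + k ^ 2 := by
  have norm_radial_sq : ‖(k / ‖x‖) • x‖ ^ 2 = k ^ 2 := by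
    rw [norm_smul, norm_div, norm_norm, div_mul_cancel₀ _ (norm_ne_zero_iff.mpr hx),
      Real.norm_eq_abs, sq_abs]
  rw [norm_sub_sq_real, real_inner_smul_right, norm_radial_sq, norm_velocityCrossMomentum_sq,
    inner_velocityCrossMomentum_position, keplerEnergy]
  ring

theorem norm_eccentricityVector_sq {k : ℝ} (hk : k ≠ 0) {x : V} (hx : x ≠ 0) (v : V) :
    ‖eccentricityVector k x v‖ ^ 2 =
      1 + 2 * keplerEnergy k x v * angularMomentumSq x v / k ^ 2 := by
  rw [eccentricityVector, norm_smul, mul_pow, norm_velocityCrossMomentum_sub_sq k hx, norm_inv,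
    inv_pow, Real.norm_eq_abs, sq_abs]
  field_simp
  ring

theorem eccentricity_norm_sq_general {k : ℝ} (hk : k ≠ 0) {x : V} (hx : x ≠ 0) (v : V) :
    ‖eccentricityVector k x v‖ ^ 2 =
      1 + 2 * keplerEnergy k x v * angularMomentumSq x v / k ^ 2 ∧
    (angularMomentumSq x v ≠ 0 →
      (keplerEnergy k x v < 0 ↔ ‖eccentricityVector k x v‖ < 1) ∧
      (0 < keplerEnergy k x v ↔ 1 < ‖eccentricityVector k x v‖)) := by
  have norm_sq := norm_eccentricityVector_sq hk hx v
  refine ⟨norm_sq, fun hL ↦ ?_⟩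
  have factor_pos : 0 < 2 * angularMomentumSq x v / k ^ 2 := by
    have := (angularMomentumSq_nonneg x v).lt_of_ne' hL
    positivity
  have norm_sq_eq_one_add_mul : ‖eccentricityVector k x v‖ ^ 2 =
      1 + 2 * angularMomentumSq x v / k ^ 2 * keplerEnergy k x v := by
    rw [norm_sq]
    ring
  constructor
  · rw [← sq_lt_one_iff₀ (norm_nonneg _), norm_sq_eq_one_add_mul, add_lt_iff_neg_left]
    exact (smul_neg_iff_of_pos_left factor_pos).symm
  · rw [← one_lt_sq_iff₀ (norm_nonneg _), norm_sq_eq_one_add_mul, lt_add_iff_pos_right]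
    exact (mul_pos_iff_of_pos_left factor_pos).symm

end InnerProductSpace

section CrossProduct

theorem cross3_eq_toLp_crossProduct (a b : EuclideanSpace ℝ (Fin 3)) :
    cross3 a b = WithLp.toLp 2 (a.ofLp ⨯₃ b.ofLp) := by
  rw [cross_apply]
  rfl

theorem cross3_cross3_right (a b c : EuclideanSpace ℝ (Fin 3)) :
    cross3 a (cross3 b c) = ⟪a, c⟫ • b - ⟪b, a⟫ • c := by
  simp only [cross3_eq_toLp_crossProduct, cross_cross_eq_smul_sub_smul',
    EuclideanSpace.inner_eq_star_dotProduct, star_trivial, dotProduct_comm]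
  rfl

theorem inner_cross3_cross3 (a b c d : EuclideanSpace ℝ (Fin 3)) :
    ⟪cross3 a b, cross3 c d⟫ = ⟪a, c⟫ * ⟪b, d⟫ - ⟪a, d⟫ * ⟪b, c⟫ := by
  simp only [cross3_eq_toLp_crossProduct, EuclideanSpace.inner_eq_star_dotProduct, star_trivial,
    cross_dot_cross]
  ring

theorem norm_cross3_sq (x v : EuclideanSpace ℝ (Fin 3)) :
    ‖cross3 x v‖ ^ 2 = angularMomentumSq x v := by
  rw [← real_inner_self_eq_norm_sq, inner_cross3_cross3, real_inner_self_eq_norm_sq,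
    real_inner_self_eq_norm_sq, real_inner_comm x v, ← sq, angularMomentumSq]

theorem cross3_cross3_eq_velocityCrossMomentum (x v : EuclideanSpace ℝ (Fin 3)) :
    cross3 v (cross3 x v) = velocityCrossMomentum x v := by
  rw [cross3_cross3_right, real_inner_self_eq_norm_sq, velocityCrossMomentum]

end CrossProduct

/-- The norm of the eccentricity vector satisfies
`‖e‖² = 1 + 32 E ‖J‖²/(G M)²`; in particular (when `J ≠ 0`) `E < 0 ↔ ‖e‖ < 1` and
`E > 0 ↔ ‖e‖ > 1`. -/
theorem eccentricity_norm_sq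
    (G M : ℝ) (hG : 0 < G) (hM : 0 < M)
    (x v : EuclideanSpace ℝ (Fin 3)) (hx : x ≠ 0)
    (Ept : ℝ) (hE : Ept = (1 / 2) * ‖v‖ ^ 2 - G * M / (4 * ‖x‖))
    (J : EuclideanSpace ℝ (Fin 3)) (hJ : J = cross3 x v)
    (e : EuclideanSpace ℝ (Fin 3))
    (he : e = (4 / (G * M)) • (cross3 v J - (G * M / (4 * ‖x‖)) • x)) :
    ‖e‖ ^ 2 = 1 + 32 * Ept * ‖J‖ ^ 2 / (G * M) ^ 2 ∧
    (J ≠ 0 → ((Ept < 0 ↔ ‖e‖ < 1) ∧ (0 < Ept ↔ 1 < ‖e‖))) := by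
  have energy_eq : Ept = keplerEnergy (G * M / 4) x v := by rw [hE, keplerEnergy, div_div]
  have norm_J_sq : ‖J‖ ^ 2 = angularMomentumSq x v := by rw [hJ, norm_cross3_sq]
  have e_eq : e = eccentricityVector (G * M / 4) x v := by
    rw [he, hJ, cross3_cross3_eq_velocityCrossMomentum, eccentricityVector, inv_div, div_div]
  obtain ⟨norm_sq, energy_sign⟩ :=
    eccentricity_norm_sq_general (k := G * M / 4) (by positivity) hx v
  rw [← energy_eq, ← norm_J_sq, ← e_eq] at norm_sq energy_sign
  refine ⟨norm_sq.trans (by ring), fun J_ne_zero ↦ energy_sign ?_⟩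
  exact pow_ne_zero 2 (norm_ne_zero_iff.mpr J_ne_zero)
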